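/- Let Q ∈ ℂ^{2d×2d} be symmetric, F = J Q, and let S = { X ∈ ℝ^{2d} : Re F · (Im F)^j · X = 0 for all 0 ≤ j ≤ 2d−1 } be the singular space of Q. Then for every t > 0, S = { X ∈ ℝ^{2d} : Im( exp(2 i s F) )·X = 0 for all s ∈ [0, t] }, where Im(exp(2isF)) denotes the entrywise imaginary part of the matrix exponential exp(2isF). -/

import Mathlib

open Matrix Complex

namespace Stmt8

/-- The standard symplectic matrix `J = [[0, I],[−I, 0]]` on `ℂ^{2d} = ℂ^d ⊕ ℂ^d`. -/
noncomputable def J (d : ℕ) : Matrix (Fin d ⊕ Fin d) (Fin d ⊕ Fin d) ℂ :=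
  Matrix.fromBlocks 0 1 (-1) 0

/-- The singular space of a symmetric `Q ∈ ℂ^{2d×2d}` with Hamilton map `F = J Q`:
`S = { X ∈ ℝ^{2d} : Re F (Im F)^j X = 0 for 0 ≤ j ≤ 2d−1 }`. -/
def singularSpace (d : ℕ) (Q : Matrix (Fin d ⊕ Fin d) (Fin d ⊕ Fin d) ℂ) :
    Set (Fin d ⊕ Fin d → ℝ) :=
  {X | ∀ j : ℕ, j ≤ 2 * d - 1 →
    (((J d * Q).map Complex.re) * ((J d * Q).map Complex.im) ^ j).mulVec X = 0}

/-- Passing to the complex vector. -/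
theorem im_mulVec {n : Type*} [Fintype n] (N : Matrix n n ℂ) (X : n → ℝ) (i : n) :
    (N.map Complex.im).mulVec X i = (N.mulVec (fun j => (X j : ℂ)) i).im := by
  simp [Matrix.mulVec, dotProduct]

theorem step_im {n : Type*} [Fintype n] (F : Matrix n n ℂ) (v : n → ℝ) (i : n) :
    ((((2 * Complex.I) • F).mulVec (fun j => (v j : ℂ))) i).im
      = 2 * (F.map Complex.re).mulVec v i := by
  simp [Matrix.mulVec, dotProduct, Finset.mul_sum, mul_assoc]

theorem step_re {n : Type*} [Fintype n] (F : Matrix n n ℂ) (v : n → ℝ) (i : n) :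
    ((((2 * Complex.I) • F).mulVec (fun j => (v j : ℂ))) i).re
      = -2 * (F.map Complex.im).mulVec v i := by
  simp [Matrix.mulVec, dotProduct, Finset.mul_sum, mul_assoc]

theorem step_full {n : Type*} [Fintype n] (F : Matrix n n ℂ) (v : n → ℝ)
    (h : (F.map Complex.re).mulVec v = 0) :
    ((2 * Complex.I) • F).mulVec (fun j => (v j : ℂ))
      = fun i => (((-2 : ℝ) • (F.map Complex.im).mulVec v) i : ℂ) := by
  funext i
  apply Complex.ext
  · rw [step_re]; simp
  · rw [step_im, h]; simp

theorem pow_full {n : Type*} [Fintype n] [DecidableEq n] (F : Matrix n n ℂ) (X : n → ℝ) (k : ℕ)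
    (h : ∀ j < k, (F.map Complex.re).mulVec (((F.map Complex.im) ^ j).mulVec X) = 0) :
    (((2 * Complex.I) • F) ^ k).mulVec (fun j => (X j : ℂ))
      = fun i => ((((-2 : ℝ) ^ k) • ((F.map Complex.im) ^ k).mulVec X) i : ℂ) := by
  induction k with
  | zero => simp
  | succ k ih =>
    rw [pow_succ', ← Matrix.mulVec_mulVec, ih (fun j hj => h j (by omega)), step_full]
    · rw [pow_succ' (F.map Complex.im), ← Matrix.mulVec_mulVec, Matrix.mulVec_smul, smul_smul,
        ← pow_succ']
    · rw [Matrix.mulVec_smul, h k (by omega), smul_zero]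

theorem alg_iff {n : Type*} [Fintype n] [DecidableEq n] (F : Matrix n n ℂ) (X : n → ℝ) :
    (∀ k : ℕ, ((((2 * Complex.I) • F) ^ k).map Complex.im).mulVec X = 0) ↔
    ∀ j : ℕ, (F.map Complex.re).mulVec (((F.map Complex.im) ^ j).mulVec X) = 0 := by
  constructor
  · intro h j
    induction j using Nat.strong_induction_on with
    | _ j ih =>
      have h1 := h (j + 1)
      funext i
      have h2 := congrFun h1 i
      rw [im_mulVec, pow_succ', ← Matrix.mulVec_mulVec, pow_full F X j ih, step_im,
        Matrix.mulVec_smul] at h2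
      simpa using h2
  · intro h k
    funext i
    rw [im_mulVec, pow_full F X k (fun j _ => h j)]
    exact Complex.ofReal_im _

theorem cayley (d : ℕ) (A B : Matrix (Fin d ⊕ Fin d) (Fin d ⊕ Fin d) ℝ) (X : Fin d ⊕ Fin d → ℝ)
    (h : ∀ j : ℕ, j ≤ 2 * d - 1 → (A * B ^ j).mulVec X = 0) (j : ℕ) :
    (A * B ^ j).mulVec X = 0 := by
  rcases Nat.eq_zero_or_pos d with rfl | hd
  · exact Subsingleton.elim _ _
  have hc : B.charpoly.natDegree = 2 * d := by
    rw [Matrix.charpoly_natDegree_eq_dim]; simp; omega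
  have hlt : ((Polynomial.X ^ j : Polynomial ℝ) %ₘ B.charpoly).natDegree < 2 * d := by
    rw [← hc]
    apply Polynomial.natDegree_modByMonic_lt _ (Matrix.charpoly_monic B)
    intro h1
    rw [h1] at hc
    simp at hc
    omega
  rw [Matrix.pow_eq_aeval_mod_charpoly, Polynomial.aeval_eq_sum_range' hlt, Finset.mul_sum,
    Matrix.sum_mulVec]
  apply Finset.sum_eq_zero
  intro i hi
  rw [Matrix.mul_smul, Matrix.smul_mulVec, h i (by have := Finset.mem_range.1 hi; omega),
    smul_zero]

/-- The real-linear map `N ↦ Im N · X`. -/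
noncomputable def imL {n : Type*} [Fintype n] (X : n → ℝ) : Matrix n n ℂ →ₗ[ℝ] (n → ℝ) where
  toFun N := (N.map Complex.im).mulVec X
  map_add' N N' := by
    funext i; simp [Matrix.mulVec, dotProduct, add_mul, Finset.sum_add_distrib]
  map_smul' c N := by
    funext i; simp [Matrix.mulVec, dotProduct, Finset.mul_sum, mul_assoc]

section
attribute [local instance] Matrix.linftyOpNormedRing Matrix.linftyOpNormedAlgebra

theorem exp_iff {n : Type*} [Fintype n] [DecidableEq n] (M : Matrix n n ℂ) (X : n → ℝ)
    (t : ℝ) (ht : 0 < t) :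
    (∀ k : ℕ, ((M ^ k).map Complex.im).mulVec X = 0) ↔
    ∀ s ∈ Set.Icc (0 : ℝ) t, ((NormedSpace.exp (s • M)).map Complex.im).mulVec X = 0 := by
  have hL : Continuous (imL X) := LinearMap.continuous_of_finiteDimensional _
  constructor
  · intro h s _
    have h1 := NormedSpace.exp_series_hasSum_exp' (𝕂 := ℝ) (s • M)
    have h2 := h1.map (imL X) hL
    have h3 : (imL X) ∘ (fun k : ℕ => ((k.factorial : ℝ)⁻¹) • (s • M) ^ k) = fun _ => 0 := by
      funext k
      have : imL X (M ^ k) = 0 := h k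
      simp only [Function.comp, smul_pow, map_smul, this, smul_zero]
    rw [h3] at h2
    exact h2.unique hasSum_zero
  · intro h
    have key : ∀ k : ℕ, ∀ s ∈ Set.Icc (0 : ℝ) t,
        imL X (M ^ k * NormedSpace.exp (s • M)) = 0 := by
      intro k
      induction k with
      | zero => intro s hs; rw [pow_zero, one_mul]; exact h s hs
      | succ k ih =>
        intro s hs
        have h1 : HasDerivAt (fun u : ℝ => NormedSpace.exp (u • M))
            (M * NormedSpace.exp (s • M)) s := hasDerivAt_exp_smul_const' (𝕂 := ℝ) M s
        have h2 := h1.const_mul (M ^ k)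
        have h3 := ((LinearMap.toContinuousLinearMap (imL X)).hasFDerivAt.comp_hasDerivAt s
          h2).hasDerivWithinAt (s := Set.Icc 0 t)
        have h4 : HasDerivWithinAt (fun _ : ℝ => (0 : n → ℝ)) 0 (Set.Icc 0 t) s :=
          hasDerivWithinAt_const _ _ _
        have h5 := h4.congr (f₁ := (LinearMap.toContinuousLinearMap (imL X)) ∘
          (fun u : ℝ => M ^ k * NormedSpace.exp (u • M))) (fun u hu => ih u hu) (ih s hs)
        have h6 := (uniqueDiffOn_Icc ht s hs).eq_deriv _ h3 h5
        rw [pow_succ, mul_assoc]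
        exact h6
    intro k
    have := key k 0 ⟨le_refl _, ht.le⟩
    rw [zero_smul, NormedSpace.exp_zero, mul_one] at this
    exact this

end

/-- characterization of the singular space via the flow.  Let
`Q ∈ ℂ^{2d×2d}` be symmetric with Hamilton map `F = J Q` and singular space `S`.  Then for
every `t > 0`, `S = { X ∈ ℝ^{2d} : Im(exp(2isF)) X = 0 for all s ∈ [0,t] }`. -/
theorem stmt_8 (d : ℕ) (Q : Matrix (Fin d ⊕ Fin d) (Fin d ⊕ Fin d) ℂ) (hQ : Q.IsSymm) :
    ∀ t : ℝ, 0 < t →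
      singularSpace d Q
        = {X : Fin d ⊕ Fin d → ℝ | ∀ s ∈ Set.Icc (0 : ℝ) t,
            ((NormedSpace.exp ((2 * Complex.I * s) • (J d * Q))).map
                Complex.im).mulVec X = 0} := by
  intro t ht
  ext X
  simp only [singularSpace, Set.mem_setOf_eq]
  have e : ∀ s : ℝ, (2 * Complex.I * s) • (J d * Q) = s • ((2 * Complex.I) • (J d * Q)) := by
    intro s
    ext i j
    simp only [Matrix.smul_apply, smul_eq_mul, Complex.real_smul]
    ring
  simp only [e]
  rw [← exp_iff _ X t ht, alg_iff]
  constructor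
  · intro h j
    rw [Matrix.mulVec_mulVec]
    exact cayley d _ _ X h j
  · intro h j _
    rw [← Matrix.mulVec_mulVec]
    exact h j

end Stmt8
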